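/- Pohozaev identities for the scalar ground state equation: Let N ≥ 5 be an integer and 1 < p < N/(N-4). Suppose w : ℝ^N → ℝ is a Schwartz function solving Δ²w + w = |w|^{2p-2} w pointwise on ℝ^N. Then ‖Δw‖² = (N(p-1)/(N - p(N-4))) ‖w‖² and ∫_{ℝ^N} |w|^{2p} dx = (4p/(N - p(N-4))) ‖w‖². -/

import Mathlib

open MeasureTheory Finset

noncomputable section

/-- Laplacian as the sum of second derivatives along the coordinate directions. -/
def lap {N : ℕ} {F : Type*} [NormedAddCommGroup F] [NormedSpace ℝ F]
    (u : EuclideanSpace ℝ (Fin N) → F) (x : EuclideanSpace ℝ (Fin N)) : F :=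
  ∑ i : Fin N, iteratedFDeriv ℝ 2 u x (fun _ => EuclideanSpace.single i (1 : ℝ))

/-!
Testing the equation against `w` and against the generator `x · ∇w` of dilations gives two linear
relations between `∫ (Δw)²`, `∫ w²` and `∫ |w|^{2p}`. The second one is computed from the
commutator `[Δ, x · ∇] = 2Δ` and from `∫ g(w) (x · ∇w) = ∫ x · ∇(G(w)) = -N ∫ G(w)` for `G' = g`,
applied to the nonlinearity as well as to the squares of `w` and `Δw`. Solving the linear system
expresses the other two integrals through `∫ w²`.
-/

open Module SchwartzMap
open scoped Laplacian LineDeriv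

section Euler

variable {E F : Type*} [NormedAddCommGroup E] [NormedSpace ℝ E]
  [NormedAddCommGroup F] [NormedSpace ℝ F]

/-- The Euler operator `f ↦ x · ∇f`, the generator of the dilations `f ↦ f (t x)`, on Schwartz
functions. It is encoded by applying the derivative at `x` to the vector `x` itself. -/
def eulerOp : 𝓢(E, F) →L[ℝ] 𝓢(E, F) :=
  bilinLeftCLM (ContinuousLinearMap.id ℝ (E →L[ℝ] F))
    (ContinuousLinearMap.id ℝ E).hasTemperateGrowth ∘L fderivCLM ℝ E F

lemma eulerOp_apply (f : 𝓢(E, F)) (x : E) : eulerOp f x = fderiv ℝ f x x := rfl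

lemma fderiv_lineDerivOp_apply (f : 𝓢(E, F)) (x u v : E) :
    fderiv ℝ (∂_{v} f : 𝓢(E, F)) x u = fderiv ℝ (fderiv ℝ f) x u v := by
  have hf : DifferentiableAt ℝ (fderiv ℝ f) x := (fderivCLM ℝ E F f).differentiableAt
  have hv : ⇑(∂_{v} f : 𝓢(E, F)) = fun y ↦ fderiv ℝ f y v := rfl
  rw [hv, fderiv_clm_apply hf (differentiableAt_const v)]
  simp

lemma lineDerivOp_eulerOp (f : 𝓢(E, F)) (v : E) :
    ∂_{v} (eulerOp f) = ∂_{v} f + eulerOp (∂_{v} f) := by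
  ext x
  have hf : DifferentiableAt ℝ (fderiv ℝ f) x := (fderivCLM ℝ E F f).differentiableAt
  have hsymm : IsSymmSndFDerivAt ℝ f x := (f.smooth 2).contDiffAt.isSymmSndFDerivAt (by simp)
  calc ∂_{v} (eulerOp f) x
      = fderiv ℝ (fun y ↦ fderiv ℝ f y y) x v := rfl
    _ = fderiv ℝ f x v + fderiv ℝ (fderiv ℝ f) x v x := by
        rw [fderiv_clm_apply hf differentiableAt_fun_id]
        simp
    _ = (∂_{v} f + eulerOp (∂_{v} f)) x := by
        rw [hsymm.eq, ← fderiv_lineDerivOp_apply]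
        rfl

section Integrable

variable [MeasurableSpace E] [BorelSpace E] [SecondCountableTopology E]
  (μ : Measure E) [μ.HasTemperateGrowth]

lemma integrable_mul_schwartz (f g : 𝓢(E, ℝ)) : Integrable (fun x ↦ f x * g x) μ :=
  (pairing (ContinuousLinearMap.mul ℝ ℝ) f g).integrable

lemma integrable_clm_smul_schwartz (ℓ : E →L[ℝ] ℝ) (f : 𝓢(E, F)) :
    Integrable (fun x ↦ ℓ x • f x) μ :=
  (smulLeftCLM F ℓ f).integrable.congr
    (.of_forall fun x ↦ smulLeftCLM_apply_apply ℓ.hasTemperateGrowth f x)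

end Integrable

variable [FiniteDimensional ℝ E] [MeasurableSpace E] [BorelSpace E]
  (μ : Measure E) [μ.IsAddHaarMeasure]

lemma integral_clm_smul_lineDerivOp (ℓ : E →L[ℝ] ℝ) (f : 𝓢(E, F)) (v : E) :
    ∫ x, ℓ x • ∂_{v} f x ∂μ = -(ℓ v • ∫ x, f x ∂μ) := by
  have key := integral_smul_fderiv_eq_neg_fderiv_smul_of_integrable (μ := μ) (f := ℓ) (g := f)
    (v := v) (by simpa only [ContinuousLinearMap.fderiv] using f.integrable.fun_smul (ℓ v))
    (integrable_clm_smul_schwartz μ ℓ (∂_{v} f)) (integrable_clm_smul_schwartz μ ℓ f)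
    (fun _ _ ↦ ℓ.differentiableAt) (fun _ _ ↦ f.differentiableAt)
  simpa only [ContinuousLinearMap.fderiv, lineDerivOp_apply_eq_fderiv, integral_smul] using key

lemma integral_eulerOp (f : 𝓢(E, F)) :
    ∫ x, eulerOp f x ∂μ = -((finrank ℝ E : ℝ) • ∫ x, f x ∂μ) := by
  let b := finBasis ℝ E
  let ℓ := fun i ↦ (b.coord i).toContinuousLinearMap
  have hsum : ∀ x, eulerOp f x = ∑ i, ℓ i x • ∂_{b i} f x := fun x ↦
    calc eulerOp f x = fderiv ℝ f x (∑ i, ℓ i x • b i) := by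
          rw [eulerOp_apply]
          exact congrArg _ (b.sum_repr x).symm
      _ = ∑ i, ℓ i x • ∂_{b i} f x := by
          simp only [map_sum, map_smul, lineDerivOp_apply_eq_fderiv]
  have hcoord : ∀ i, ℓ i (b i) = 1 := fun i ↦ by simp [ℓ]
  simp only [hsum]
  rw [integral_finsetSum _ fun i _ ↦ integrable_clm_smul_schwartz μ (ℓ i) (∂_{b i} f)]
  simp only [integral_clm_smul_lineDerivOp, hcoord, one_smul, sum_const, card_univ,
    Fintype.card_fin, smul_neg, Nat.cast_smul_eq_nsmul]

lemma integral_deriv_comp_mul_eulerOp {G g : ℝ → ℝ} (hG : ∀ t, HasDerivAt G (g t) t)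
    {w W : 𝓢(E, ℝ)} (hW : ∀ x, W x = G (w x)) :
    ∫ x, g (w x) * eulerOp w x ∂μ = -(finrank ℝ E * ∫ x, W x ∂μ) := by
  have hchain : ∀ x, eulerOp W x = g (w x) * eulerOp w x := fun x ↦ by
    have hderiv : HasFDerivAt W (g (w x) • fderiv ℝ w x) x := by
      rw [show ⇑W = G ∘ w from funext hW]
      exact (hG (w x)).comp_hasFDerivAt x (w.hasFDerivAt x)
    rw [eulerOp_apply, hderiv.fderiv]
    rfl
  simp only [← hchain, integral_eulerOp, smul_eq_mul]

lemma integral_mul_eulerOp_self (w : 𝓢(E, ℝ)) :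
    ∫ x, w x * eulerOp w x ∂μ = -(finrank ℝ E / 2 * ∫ x, w x ^ 2 ∂μ) := by
  have hsq : ∀ t : ℝ, HasDerivAt (fun s ↦ s ^ 2) (2 * t) t := fun t ↦ by
    simpa using hasDerivAt_pow 2 t
  have key := integral_deriv_comp_mul_eulerOp μ hsq
    (W := pairing (ContinuousLinearMap.mul ℝ ℝ) w w) fun x ↦ (sq (w x)).symm
  simp only [mul_assoc, integral_const_mul, pairing_apply_apply, ContinuousLinearMap.mul_apply',
    ← sq] at key
  linarith

end Euler

section Bilaplacian

variable {E F : Type*} [NormedAddCommGroup E] [InnerProductSpace ℝ E] [FiniteDimensional ℝ E]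
  [NormedAddCommGroup F] [NormedSpace ℝ F]

lemma laplacian_eulerOp (f : 𝓢(E, F)) : Δ (eulerOp f) = (2 : ℝ) • Δ f + eulerOp (Δ f) := by
  simp only [laplacian_eq_sum (stdOrthonormalBasis ℝ E), lineDerivOp_eulerOp,
    LineDeriv.lineDerivOp_add, sum_add_distrib, map_sum, two_smul, add_assoc]

variable [MeasurableSpace E] [BorelSpace E] (μ : Measure E) [μ.IsAddHaarMeasure]

lemma integral_bilaplacian_add_mul (w v : 𝓢(E, ℝ)) :
    ∫ x, (Δ (Δ w) x + w x) * v x ∂μ = ∫ x, Δ w x * Δ v x ∂μ + ∫ x, w x * v x ∂μ := by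
  simp only [add_mul]
  rw [integral_add (integrable_mul_schwartz μ _ _) (integrable_mul_schwartz μ _ _),
    integral_mul_laplacian_right_eq_left]

lemma integral_bilaplacian_add_mul_self (w : 𝓢(E, ℝ)) :
    ∫ x, (Δ (Δ w) x + w x) * w x ∂μ = ∫ x, Δ w x ^ 2 ∂μ + ∫ x, w x ^ 2 ∂μ := by
  simp only [integral_bilaplacian_add_mul, sq]

lemma integral_bilaplacian_add_mul_eulerOp (w : 𝓢(E, ℝ)) :
    ∫ x, (Δ (Δ w) x + w x) * eulerOp w x ∂μ =
      (2 - finrank ℝ E / 2) * ∫ x, Δ w x ^ 2 ∂μ - finrank ℝ E / 2 * ∫ x, w x ^ 2 ∂μ := by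
  have hΔ : ∫ x, Δ w x * Δ (eulerOp w) x ∂μ =
      2 * ∫ x, Δ w x ^ 2 ∂μ + ∫ x, Δ w x * eulerOp (Δ w) x ∂μ := by
    rw [laplacian_eulerOp, ← integral_const_mul, ← integral_add]
    · congr 1 with x
      simp only [_root_.add_apply, _root_.smul_apply, smul_eq_mul]
      ring
    · simpa only [sq] using (integrable_mul_schwartz μ (Δ w) (Δ w)).const_mul 2
    · exact integrable_mul_schwartz μ _ _
  rw [integral_bilaplacian_add_mul, hΔ, integral_mul_eulerOp_self, integral_mul_eulerOp_self]
  ring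

lemma pohozaev_identity {G g : ℝ → ℝ} (hG : ∀ t, HasDerivAt G (g t) t) {w W : 𝓢(E, ℝ)}
    (hW : ∀ x, W x = G (w x)) (hsol : ∀ x, Δ (Δ w) x + w x = g (w x)) :
    (finrank ℝ E - 4) * ∫ x, Δ w x ^ 2 ∂μ + finrank ℝ E * ∫ x, w x ^ 2 ∂μ =
      2 * finrank ℝ E * ∫ x, W x ∂μ := by
  have hlhs := integral_bilaplacian_add_mul_eulerOp μ w
  have hrhs := integral_deriv_comp_mul_eulerOp μ hG hW
  simp only [hsol] at hlhs
  linear_combination 2 * hlhs - 2 * hrhs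

end Bilaplacian

lemma abs_rpow_sub_two_mul_mul_self {q : ℝ} (hq : q ≠ 0) (t : ℝ) :
    |t| ^ (q - 2) * t * t = |t| ^ q := by
  rcases eq_or_ne t 0 with rfl | ht
  · rw [mul_zero, abs_zero, Real.zero_rpow hq]
  · rw [mul_assoc, ← sq, ← sq_abs, ← Real.rpow_natCast, ← Real.rpow_add (abs_pos.mpr ht)]
    norm_num

lemma hasDerivAt_abs_rpow_div {q : ℝ} (hq : 1 < q) (t : ℝ) :
    HasDerivAt (fun s : ℝ ↦ |s| ^ q / q) (|t| ^ (q - 2) * t) t := by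
  have key := (hasDerivAt_abs_rpow t hq).div_const q
  rwa [mul_assoc, mul_div_cancel_left₀ _ (by linarith)] at key

theorem scalar_pohozaev_identities_general {E : Type*} [NormedAddCommGroup E]
    [InnerProductSpace ℝ E] [FiniteDimensional ℝ E] [MeasurableSpace E] [BorelSpace E]
    (μ : Measure E) [μ.IsAddHaarMeasure] {p : ℝ} (hp : 1 / 2 < p)
    (hpE : (finrank ℝ E : ℝ) - p * (finrank ℝ E - 4) ≠ 0) {w : 𝓢(E, ℝ)}
    (hsol : ∀ x, Δ (Δ w) x + w x = |w x| ^ (2 * p - 2) * w x) :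
    ∫ x, Δ w x ^ 2 ∂μ =
      finrank ℝ E * (p - 1) / (finrank ℝ E - p * (finrank ℝ E - 4)) * ∫ x, w x ^ 2 ∂μ ∧
    ∫ x, |w x| ^ (2 * p) ∂μ =
      4 * p / (finrank ℝ E - p * (finrank ℝ E - 4)) * ∫ x, w x ^ 2 ∂μ := by
  have hp0 : p ≠ 0 := by linarith
  have hpow : ∀ x, (Δ (Δ w) x + w x) * w x = |w x| ^ (2 * p) := fun x ↦ by
    rw [hsol, abs_rpow_sub_two_mul_mul_self (mul_ne_zero two_ne_zero hp0)]
  -- `|w|^{2p}` need not look smooth, but the equation exhibits it as the Schwartz function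
  -- `(Δ²w + w) w`.
  let W : 𝓢(E, ℝ) := (2 * p)⁻¹ • pairing (ContinuousLinearMap.mul ℝ ℝ) (Δ (Δ w) + w) w
  have hW : ∀ x, W x = |w x| ^ (2 * p) / (2 * p) := fun x ↦ by
    rw [← hpow, div_eq_inv_mul]
    rfl
  have nehari := integral_bilaplacian_add_mul_self μ w
  have pohozaev := pohozaev_identity μ (hasDerivAt_abs_rpow_div (by linarith)) hW hsol
  simp only [hpow] at nehari
  simp only [hW, integral_div] at pohozaev
  field_simp at pohozaev
  rw [div_mul_eq_mul_div, div_mul_eq_mul_div, eq_div_iff hpE, eq_div_iff hpE]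
  constructor
  · linear_combination -pohozaev - finrank ℝ E * nehari
  · linear_combination -pohozaev - p * (finrank ℝ E - 4) * nehari

lemma lap_coe {N : ℕ} {F : Type*} [NormedAddCommGroup F] [NormedSpace ℝ F]
    (f : 𝓢(EuclideanSpace ℝ (Fin N), F)) :
    lap f = (Δ f : 𝓢(EuclideanSpace ℝ (Fin N), F)) := by
  ext x
  simp only [lap, laplacian_eq_sum (EuclideanSpace.basisFun (Fin N) ℝ), _root_.sum_apply,
    EuclideanSpace.basisFun_apply, ← iteratedLineDerivOp_eq_iteratedFDeriv]
  rfl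

/-- **Pohozaev identities for the scalar ground state equation** `Δ²w + w = |w|^{2p-2} w`. -/
theorem scalar_pohozaev_identities (N : ℕ) (hN : 5 ≤ N) (p : ℝ) (hp : 1 < p)
    (hpN : p < (N : ℝ) / ((N : ℝ) - 4))
    (w : SchwartzMap (EuclideanSpace ℝ (Fin N)) ℝ)
    (hsol : ∀ x, lap (lap (⇑w)) x + w x = |w x| ^ (2 * p - 2) * w x) :
    (∫ x, ‖lap (⇑w) x‖ ^ 2) =
      ((N : ℝ) * (p - 1) / ((N : ℝ) - p * ((N : ℝ) - 4))) * ∫ x, ‖w x‖ ^ 2 ∧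
    (∫ x, |w x| ^ (2 * p)) =
      (4 * p / ((N : ℝ) - p * ((N : ℝ) - 4))) * ∫ x, ‖w x‖ ^ 2 := by
  have hN5 : (5 : ℝ) ≤ N := by exact_mod_cast hN
  have hpE : (N : ℝ) - p * (N - 4) ≠ 0 :=
    (sub_pos.mpr ((lt_div_iff₀ (by linarith)).mp hpN)).ne'
  simp only [lap_coe] at hsol ⊢
  simpa using scalar_pohozaev_identities_general volume (p := p) (by linarith)
    (by simpa using hpE) hsol
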